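/- Let X_R and X be real vector spaces with X_R finite-dimensional, Y a type, Q : X_R → X linear, N ∈ ℕ, P : X → (Fin N → ℝ) linear, and S a set of functions from X to Y. Assume: (i) every F ∈ S factors through P, i.e. there exists F̂ : (Fin N → ℝ) → Y with F = F̂ ∘ P; and (ii) for every coordinate i ∈ Fin N there exist F ∈ S and g : Y → ℝ with (P x) i = g(F(x)) for all x ∈ X. Then for every linear functional f : X_R → ℝ, the following are equivalent: (a) f is learnable through Q, i.e. there exist m ∈ ℕ, F₁,…,F_m ∈ S, and f̂ : Yᵐ → ℝ with f(r) = f̂(F₁(Q r),…,F_m(Q r)) for all r ∈ X_R; (b) there exists a linear functional g on Fin N → ℝ with f = g ∘ P ∘ Q. (This is the learnable half of the paper's theorem L_R = Im(Qᵀ ∘ Pᵀ); taking Q the identity gives the complete-model statement L = Im Pᵀ.) -/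

import Mathlib

/-!
A learnable `f` takes equal values at points with equal image under `P ∘ Q`, because experiments
factor through `P`; hence `f` vanishes on `ker (P ∘ Q)`, and the annihilator of that kernel is
the range of the transpose of `P ∘ Q` (`LinearMap.range_dualMap_eq_dualAnnihilator_ker`).
Conversely, one experiment per coordinate of `P` recovers `P (Q r)`, so any function of `P (Q r)`
is learnable from `N` experiments.
-/

/-- The reduced learnable space equals `Im (Qᵀ ∘ Pᵀ)`: given that every experiment
factors through the observation map `P` and every coordinate of `P` is determined by
some experiment, a linear functional `f` on the (finite-dimensional) reduced parameter
space is learnable through `Q` iff it factors as a linear functional composed with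
`P ∘ Q`. -/
theorem reduced_learnable_iff {XR X Y : Type*}
    [AddCommGroup XR] [Module ℝ XR] [FiniteDimensional ℝ XR]
    [AddCommGroup X] [Module ℝ X]
    (Q : XR →ₗ[ℝ] X) (N : ℕ) (P : X →ₗ[ℝ] (Fin N → ℝ)) (S : Set (X → Y))
    (h1 : ∀ F ∈ S, ∃ Fhat : (Fin N → ℝ) → Y, ∀ x : X, F x = Fhat (P x))
    (h2 : ∀ i : Fin N, ∃ F ∈ S, ∃ g : Y → ℝ, ∀ x : X, P x i = g (F x))
    (f : XR →ₗ[ℝ] ℝ) :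
    (∃ (m : ℕ) (F : Fin m → (X → Y)), (∀ i, F i ∈ S) ∧
        ∃ fhat : (Fin m → Y) → ℝ, ∀ r : XR, f r = fhat (fun i => F i (Q r))) ↔
      (∃ g : (Fin N → ℝ) →ₗ[ℝ] ℝ, f = g ∘ₗ (P ∘ₗ Q)) := by
  constructor
  · rintro ⟨m, F, hF, fhat, hf⟩
    have hmem : f ∈ LinearMap.range (P ∘ₗ Q).dualMap := by
      rw [LinearMap.range_dualMap_eq_dualAnnihilator_ker, Submodule.mem_dualAnnihilator]
      intro r hr
      have hPQ : P (Q r) = P (Q 0) := by simpa using hr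
      have hexp : (fun i => F i (Q r)) = fun i => F i (Q 0) := by
        funext i
        obtain ⟨Fhat, hFhat⟩ := h1 (F i) (hF i)
        rw [hFhat, hFhat, hPQ]
      rw [hf r, hexp, ← hf 0, map_zero]
    obtain ⟨g, hg⟩ := hmem
    exact ⟨g, hg.symm⟩
  · rintro ⟨g, rfl⟩
    choose F hF c hc using h2
    refine ⟨N, F, hF, fun y => g (fun i => c i (y i)), fun r => ?_⟩
    simp only [LinearMap.comp_apply, ← hc]
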